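/- For every increment function δ of size n, the covering relations of the alt-Tamari poset Tam^δ_n are exactly the δ-rotations: for Dyck words P, Q of size n, Q covers P in Tam^δ_n if and only if Q is the δ-rotation of P at some up step of P. -/

import Mathlib

/-!
Common definitions.  A letter of a word is a `Bool`: `true` is an up step `u`,
`false` is a down step `d`.  Positions in words are 0-based.
-/

/-- A (possibly empty) Dyck word: as many `u`'s as `d`'s, and every
prefix has at least as many `u`'s as `d`'s. -/
def IsDyckPath (w : List Bool) : Prop :=
  w.count true = w.count false ∧ ∀ p, p <+: w → p.count false ≤ p.count true

/-- A Dyck word of size `n`: `n` up steps, `n` down steps, every prefix has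
at least as many `u`'s as `d`'s. -/
def IsDyckWord (n : ℕ) (w : List Bool) : Prop :=
  w.count true = n ∧ w.count false = n ∧ ∀ p, p <+: w → p.count false ≤ p.count true

/-- The set of Dyck words of size `n`. -/
def DyckSet (n : ℕ) : Set (List Bool) := {w | IsDyckWord n w}

/-- An increment function: a `{0,1}`-valued function (the paper's `δ : {1,…,n} → {0,1}`;
only the values on `{1,…,n}` are ever used). -/
def IsIncFun (δ : ℕ → ℤ) : Prop := ∀ i, δ i = 0 ∨ δ i = 1

/-- The 0-based position in `w` of the `i`-th up step `u_i` (`i` is 1-based). -/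
def upPos (w : List Bool) (i : ℕ) : ℕ :=
  ((List.range w.length).filter fun q => w.getD q false = true).getD (i - 1) 0

/-- `h_i(w)`: the (1-based, between 1 and 2n) position of the up step `u_i` in `w`. -/
def hpos (w : List Bool) (i : ℕ) : ℕ := upPos w i + 1

/-- The change of δ-altitude produced by the letter at position `q` of `w`:
the up step `u_i` contributes `δ i`, a down step contributes `-1`. -/
def stepVal (δ : ℕ → ℤ) (w : List Bool) (q : ℕ) : ℤ :=
  if w.getD q false = true then δ ((w.take (q + 1)).count true) else -1

/-- The δ-elevation of the factor of `w` occupying positions `a, …, b-1`. -/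
def elev (δ : ℕ → ℤ) (w : List Bool) (a b : ℕ) : ℤ :=
  ∑ q ∈ Finset.Ico a b, stepVal δ w q

/-- `C` is the δ-excursion of the up step of `w` at position `p`:
the smallest (nonempty) factor of `w` starting at `p` whose δ-elevation is `0`. -/
def IsDeltaExcAt (δ : ℕ → ℤ) (w : List Bool) (p : ℕ) (C : List Bool) : Prop :=
  w.getD p false = true ∧
  ∃ m, 0 < m ∧ p + m ≤ w.length ∧ C = (w.drop p).take m ∧
    elev δ w p (p + m) = 0 ∧ ∀ m', 0 < m' → m' < m → elev δ w p (p + m') ≠ 0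

/-- `C` is the excursion of the up step of `w` at position `p`: the smallest factor
of `w` starting at `p` that is itself a Dyck word. -/
def IsExcursionAt (w : List Bool) (p : ℕ) (C : List Bool) : Prop :=
  w.getD p false = true ∧
  ∃ m, 0 < m ∧ p + m ≤ w.length ∧ C = (w.drop p).take m ∧ IsDyckPath C ∧
    ∀ m', 0 < m' → m' < m → ¬ IsDyckPath ((w.drop p).take m')

/-- `ℓ_i(w; δ)`: the length of the δ-excursion of `u_i` in `w`. -/
noncomputable def excLen (δ : ℕ → ℤ) (w : List Bool) (i : ℕ) : ℕ :=
  sInf {m | 0 < m ∧ elev δ w (upPos w i) (upPos w i + m) = 0}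

/-- `Q` is the δ-rotation of `P` at some up step: `P = A d C B` with `d u_i` a valley
and `C` the δ-excursion of `u_i`, and `Q = A C d B`. -/
def DeltaRot (δ : ℕ → ℤ) (P Q : List Bool) : Prop :=
  ∃ A C B, P = A ++ false :: (C ++ B) ∧ Q = A ++ (C ++ false :: B) ∧
    IsDeltaExcAt δ P (A.length + 1) C

/-- The alt-Tamari order `Tam^δ`: reflexive transitive closure of δ-rotations. -/
def altLE (δ : ℕ → ℤ) : List Bool → List Bool → Prop :=
  Relation.ReflTransGen (DeltaRot δ)

/-- The Tamari order: the alt-Tamari order for `δ ≡ 1` (the δ-excursion of any up step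
is then its excursion). -/
def tamLE : List Bool → List Bool → Prop := altLE fun _ => 1

/-- The height (number of `u`'s minus number of `d`'s) of the length-`j` prefix of `w`. -/
def prefHeight (w : List Bool) (j : ℕ) : ℤ :=
  ((w.take j).count true : ℤ) - ((w.take j).count false : ℤ)

/-- The Dyck (inclusion) order: every prefix height of `P` is at most that of `Q`. -/
def dyckLE (P Q : List Bool) : Prop := ∀ j, prefHeight P j ≤ prefHeight Q j

/-- Strict version of a relation `le`. -/
def ltOf (le : List Bool → List Bool → Prop) (P Q : List Bool) : Prop :=
  le P Q ∧ ¬ le Q P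

/-- There is a strict chain `P = c 0 < c 1 < ⋯ < c k = Q` inside `S`. -/
def HasChainIn (S : Set (List Bool)) (le : List Bool → List Bool → Prop)
    (P Q : List Bool) (k : ℕ) : Prop :=
  ∃ c : ℕ → List Bool, c 0 = P ∧ c k = Q ∧ (∀ i ≤ k, c i ∈ S) ∧
    ∀ i < k, ltOf le (c i) (c (i + 1))

/-- The interval `[P,Q]` of the poset `(S, le)` has height `k`: `k` is the maximal
length of a chain from `P` to `Q`. -/
def IntervalHeight (S : Set (List Bool)) (le : List Bool → List Bool → Prop)
    (P Q : List Bool) (k : ℕ) : Prop :=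
  HasChainIn S le P Q k ∧ ∀ m, HasChainIn S le P Q m → m ≤ k

/-- The interval `[P,Q]` of the poset `(S, le)` is linear: it is totally ordered. -/
def LinearInterval (S : Set (List Bool)) (le : List Bool → List Bool → Prop)
    (P Q : List Bool) : Prop :=
  P ∈ S ∧ Q ∈ S ∧ le P Q ∧
  ∀ R R', R ∈ S → R' ∈ S → le P R → le R Q → le P R' → le R' Q → le R R' ∨ le R' R

/-- `Q` covers `P` in the poset `(S, le)`. -/
def CovIn (S : Set (List Bool)) (le : List Bool → List Bool → Prop)
    (P Q : List Bool) : Prop :=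
  P ∈ S ∧ Q ∈ S ∧ ltOf le P Q ∧ ∀ R ∈ S, ¬ (ltOf le P R ∧ ltOf le R Q)

/-- The number of valleys (factors `du`) of `w`. -/
def valleys (w : List Bool) : ℕ :=
  ((List.range w.length).filter fun q => !w.getD q true && w.getD (q + 1) false).length

/-!
Record a word by the function sending `k` to the `δ`-altitude at which its up step number `k`
starts.  The `δ`-rotation at an up step `a` raises this function by one exactly on the excursion of
`a`, the interval of those `k ≥ a` up to which the function stays above its value at `a`.

Excursions are nested, so a rotation that raises `a` also raises every `b` in the excursion
of `a`.  Suppose two rotations of `P`, at `a` and at `b`, give `Q` and `R` with `R ≤ Q`.  Then `b`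
lies in the excursion of `a`.  If `b ≠ a`, then between `R` and `Q` the value at `b` no longer
changes while the value at `a` still has to grow, which is impossible.  So distinct rotations of the
same word are incomparable, and no word lies strictly between a word and one of its rotations.
-/

section Raise

variable {ι : Type*} [LinearOrder ι] {f g : ι → ℤ} {a b : ι}

/-- The excursion of `a` for an altitude function `f`: the maximal interval starting at `a` on which
`f` exceeds `f a` except at `a` itself. -/
def excursionSet (f : ι → ℤ) (a : ι) : Set ι :=
  {k | a ≤ k ∧ ∀ l ∈ Set.Ioc a k, f a < f l}

/-- The effect of a rotation on altitudes: `f` raised by one on the excursion of `a`. -/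
noncomputable def raise (f : ι → ℤ) (a : ι) : ι → ℤ :=
  f + (excursionSet f a).indicator 1

/-- `g` is obtained from `f` by a single raising; the counterpart of `DeltaRot` for altitude
functions. -/
def IsRaise (f g : ι → ℤ) : Prop :=
  ∃ a, g = raise f a

lemma self_mem_excursionSet (f : ι → ℤ) (a : ι) : a ∈ excursionSet f a :=
  ⟨le_rfl, fun _ hl => absurd hl.1 hl.2.not_gt⟩

lemma excursionSet_subset (hb : b ∈ excursionSet f a) : excursionSet f b ⊆ excursionSet f a := by
  rintro c ⟨hbc, hc⟩
  have hab : f a ≤ f b := by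
    rcases hb.1.eq_or_lt with rfl | hlt
    · exact le_rfl
    · exact (hb.2 b ⟨hlt, le_rfl⟩).le
  refine ⟨hb.1.trans hbc, fun l hl => ?_⟩
  rcases le_or_gt l b with hlb | hbl
  · exact hb.2 l ⟨hl.1, hlb⟩
  · exact hab.trans_lt (hc l ⟨hbl, hl.2⟩)

lemma mem_excursionSet_of_le (hfg : f ≤ g) (ha : g a = f a) (hb : b ∈ excursionSet f a) :
    b ∈ excursionSet g a :=
  ⟨hb.1, fun l hl => ha.trans_lt ((hb.2 l hl).trans_le (hfg l))⟩

lemma raise_apply_of_mem (hb : b ∈ excursionSet f a) : raise f a b = f b + 1 := by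
  simp [raise, hb]

lemma raise_apply_of_notMem (hb : b ∉ excursionSet f a) : raise f a b = f b := by
  simp [raise, hb]

lemma lt_raise (f : ι → ℤ) (a : ι) : f < raise f a := by
  refine Pi.lt_def.2 ⟨le_add_of_nonneg_right (Set.indicator_nonneg fun _ _ => zero_le_one), a, ?_⟩
  rw [raise_apply_of_mem (self_mem_excursionSet f a)]
  exact lt_add_one _

lemma IsRaise.lt (h : IsRaise f g) : f < g := by
  obtain ⟨a, rfl⟩ := h
  exact lt_raise f a

lemma le_of_reflTransGen_isRaise (h : Relation.ReflTransGen IsRaise f g) : f ≤ g := by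
  induction h with
  | refl => exact le_rfl
  | tail _ hs ih => exact ih.trans hs.lt.le

lemma apply_eq_of_mem_excursionSet (h : Relation.ReflTransGen IsRaise f g)
    (hb : b ∈ excursionSet f a) (hfg : g b = f b) : g a = f a := by
  induction h using Relation.ReflTransGen.head_induction_on with
  | refl => rfl
  | @head f f' hf hs ih =>
    have hf'b : f' b = f b :=
      le_antisymm ((le_of_reflTransGen_isRaise hs b).trans_eq hfg) (hf.lt.le b)
    have hf'a : f' a = f a := by
      obtain ⟨c, rfl⟩ := hf
      refine raise_apply_of_notMem fun hac => ?_
      rw [raise_apply_of_mem (excursionSet_subset hac hb)] at hf'b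
      omega
    rw [ih (mem_excursionSet_of_le hf.lt.le hf'a hb) (hfg.trans hf'b.symm), hf'a]

lemma eq_of_reflTransGen_raise (h : Relation.ReflTransGen IsRaise (raise f b) (raise f a)) :
    b = a := by
  have hle : raise f b b ≤ raise f a b := le_of_reflTransGen_isRaise h b
  have hfb := raise_apply_of_mem (self_mem_excursionSet f b)
  have hba : b ∈ excursionSet f a := by
    by_contra hba
    rw [hfb, raise_apply_of_notMem hba] at hle
    omega
  by_contra hne
  have hlt : a < b := hba.1.lt_of_ne' hne
  have hfa : raise f b a = f a := raise_apply_of_notMem fun hab => hlt.not_ge hab.1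
  have hsame : raise f a a = raise f b a :=
    apply_eq_of_mem_excursionSet h (mem_excursionSet_of_le (lt_raise f b).le hfa hba)
      ((raise_apply_of_mem hba).trans hfb.symm)
  rw [raise_apply_of_mem (self_mem_excursionSet f a), hfa] at hsame
  omega

end Raise

section Altitude

variable {δ : ℕ → ℤ} {w A C D : List Bool} {k p m t : ℕ}

/-- The `δ`-altitude reached at the end of a word, that is, its total `δ`-elevation.  The sum is
shifted because the up steps are numbered from `1`. -/
def altitude (δ : ℕ → ℤ) (w : List Bool) : ℤ :=
  ∑ i ∈ Finset.range (w.count true), δ (i + 1) - w.count false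

/-- The prefix of a word that ends just before its up step number `k`, counted from `0`; the whole
word if there is no such step. -/
def beforeUp : List Bool → ℕ → List Bool
  | [], _ => []
  | false :: w, k => false :: beforeUp w k
  | true :: _, 0 => []
  | true :: w, k + 1 => true :: beforeUp w k

/-- The `δ`-altitude at which the up step number `k` of a word starts, with the conventions of
`beforeUp`: up steps are counted from `0`, and past the last one the value is the final altitude. -/
def upAltitude (δ : ℕ → ℤ) (w : List Bool) (k : ℕ) : ℤ :=
  altitude δ (beforeUp w k)

lemma beforeUp_prefix (w : List Bool) (k : ℕ) : beforeUp w k <+: w := by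
  fun_induction beforeUp w k <;> simp_all [List.cons_prefix_cons]

lemma count_true_beforeUp (w : List Bool) (k : ℕ) :
    (beforeUp w k).count true = min k (w.count true) := by
  fun_induction beforeUp w k <;> simp_all [Nat.add_min_add_right]

lemma beforeUp_append_of_lt (B : List Bool) (h : k < A.count true) :
    beforeUp (A ++ B) k = beforeUp A k := by
  fun_induction beforeUp A k <;> simp_all [beforeUp]

lemma beforeUp_append_add (A B : List Bool) (k : ℕ) :
    beforeUp (A ++ B) (A.count true + k) = A ++ beforeUp B k := by
  induction A with
  | nil => simp
  | cons x A ih => cases x <;> simp [beforeUp, ih, Nat.add_right_comm _ 1 k]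

lemma altitude_eq_of_perm {v : List Bool} (h : w.Perm v) : altitude δ w = altitude δ v := by
  simp only [altitude, h.count_eq]

lemma altitude_append_le_of_count_true_eq_zero (A : List Bool) (hD : D.count true = 0) :
    altitude δ (A ++ D) ≤ altitude δ A := by
  simp only [altitude, List.count_append, hD, add_zero]
  omega

lemma altitude_append_false_cons (δ : ℕ → ℤ) (A D : List Bool) :
    altitude δ (A ++ false :: D) = altitude δ (A ++ D) - 1 := by
  simp [altitude]
  ring

lemma upAltitude_append_add_of_lt (δ : ℕ → ℤ) (A B : List Bool) (hk : k < C.count true) :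
    upAltitude δ (A ++ (C ++ B)) (A.count true + k) = altitude δ (A ++ beforeUp C k) := by
  rw [upAltitude, beforeUp_append_add, beforeUp_append_of_lt B hk]

lemma upAltitude_append_count_true_le (δ : ℕ → ℤ) (A B : List Bool) :
    upAltitude δ (A ++ B) (A.count true) ≤ altitude δ A := by
  have hbefore : beforeUp (A ++ B) (A.count true) = A ++ beforeUp B 0 := beforeUp_append_add A B 0
  rw [upAltitude, hbefore]
  exact altitude_append_le_of_count_true_eq_zero A (by simp [count_true_beforeUp])

lemma altitude_take_succ (δ : ℕ → ℤ) (hp : p < w.length) :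
    altitude δ (w.take (p + 1)) = altitude δ (w.take p) + stepVal δ w p := by
  unfold altitude stepVal
  rw [List.take_succ_eq_append_getElem hp, List.getD_eq_getElem _ _ hp]
  cases w[p]
  · simp; ring
  · simp [Finset.sum_range_succ]; ring

lemma elev_succ (δ : ℕ → ℤ) (w : List Bool) (p t : ℕ) :
    elev δ w p (p + (t + 1)) = elev δ w p (p + t) + stepVal δ w (p + t) :=
  Finset.sum_Ico_succ_top (Nat.le_add_right p t) _

lemma elev_eq_altitude_sub (δ : ℕ → ℤ) (h : p + m ≤ w.length) :
    elev δ w p (p + m) = altitude δ (w.take (p + m)) - altitude δ (w.take p) := by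
  induction m with
  | zero => simp [elev]
  | succ m ih =>
    rw [elev_succ, ih (by omega), ← add_assoc, altitude_take_succ δ (by omega)]
    ring

lemma elev_append (δ : ℕ → ℤ) (A D B : List Bool) :
    elev δ (A ++ (D ++ B)) A.length (A.length + D.length) = altitude δ (A ++ D) - altitude δ A := by
  rw [elev_eq_altitude_sub δ (by simp), List.take_length_add_append, List.take_left,
    List.take_left]

-- A step lowers the elevation by at most one, so it cannot become negative without vanishing first.
lemma elev_pos_of_forall_ne_zero (hδ : 0 ≤ δ) (hp : w.getD p false = true)
    (hne : ∀ t, 0 < t → t < m → elev δ w p (p + t) ≠ 0) (ht₀ : 0 < t) (htm : t < m) :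
    0 < elev δ w p (p + t) := by
  induction t, ht₀ using Nat.le_induction with
  | base =>
    have hstep : elev δ w p (p + 1) = δ ((w.take (p + 1)).count true) := by
      rw [elev_succ, stepVal, add_zero, if_pos hp]
      simp [elev]
    exact (hstep.symm ▸ hδ _).lt_of_ne' (hne 1 one_pos htm)
  | succ t ht ih =>
    have hstep : -1 ≤ stepVal δ w (p + t) := by
      unfold stepVal
      split_ifs
      · exact (by norm_num : (-1 : ℤ) ≤ 0).trans (hδ _)
      · exact le_rfl
    have hpos := ih (by omega)
    have hnz := hne (t + 1) (by omega) htm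
    rw [elev_succ] at hnz ⊢
    omega

end Altitude

section Rotation

variable {δ : ℕ → ℤ} {A C B D P Q : List Bool}

lemma IsDeltaExcAt.length_spec {w : List Bool} {p : ℕ} (h : IsDeltaExcAt δ w p C) :
    0 < C.length ∧ elev δ w p (p + C.length) = 0 ∧
      ∀ t, 0 < t → t < C.length → elev δ w p (p + t) ≠ 0 := by
  obtain ⟨-, m, hm, hmw, hC, helev⟩ := h
  have hCm : C.length = m := by
    rw [hC, List.length_take, List.length_drop]
    omega
  exact hCm.symm ▸ ⟨hm, helev⟩

lemma IsDeltaExcAt.exists_eq_true_cons (h : IsDeltaExcAt δ (A ++ (C ++ B)) A.length C) :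
    ∃ C', C = true :: C' := by
  have hpos := h.length_spec.1
  have hup := h.1
  cases C with
  | nil => exact absurd hpos (lt_irrefl 0)
  | cons x C' =>
    obtain rfl : x = true := by simpa using hup
    exact ⟨C', rfl⟩

lemma IsDeltaExcAt.altitude_append (h : IsDeltaExcAt δ (A ++ (C ++ B)) A.length C) :
    altitude δ (A ++ C) = altitude δ A := by
  rw [← sub_eq_zero, ← elev_append δ A C B, h.length_spec.2.1]

lemma IsDeltaExcAt.altitude_lt (hδ : 0 ≤ δ) (h : IsDeltaExcAt δ (A ++ (C ++ B)) A.length C)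
    (hD : D <+: C) (hDnil : D ≠ []) (hDC : D ≠ C) : altitude δ A < altitude δ (A ++ D) := by
  have hlt : D.length < C.length :=
    hD.length_le.lt_of_ne fun hlen => hDC (hD.eq_of_length hlen)
  have hpos := elev_pos_of_forall_ne_zero hδ h.1 h.length_spec.2.2
    (List.length_pos_iff.2 hDnil) hlt
  obtain ⟨E, rfl⟩ := hD
  rw [List.append_assoc, elev_append] at hpos
  exact sub_pos.1 hpos

lemma IsDeltaExcAt.upAltitude_count_true (h : IsDeltaExcAt δ (A ++ (C ++ B)) A.length C) :
    upAltitude δ (A ++ (C ++ B)) (A.count true) = altitude δ A := by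
  obtain ⟨C', rfl⟩ := h.exists_eq_true_cons
  simpa [beforeUp] using
    upAltitude_append_add_of_lt (C := true :: C') (k := 0) δ A B (by simp)

lemma IsDeltaExcAt.lt_upAltitude (hδ : 0 ≤ δ) (h : IsDeltaExcAt δ (A ++ (C ++ B)) A.length C)
    {k : ℕ} (hk₀ : 0 < k) (hk : k < C.count true) :
    altitude δ A < upAltitude δ (A ++ (C ++ B)) (A.count true + k) := by
  have hcount : (beforeUp C k).count true = k := by rw [count_true_beforeUp, min_eq_left hk.le]
  rw [upAltitude_append_add_of_lt δ A B hk]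
  refine h.altitude_lt hδ (beforeUp_prefix C k) (fun hnil => ?_) fun hC => ?_
  · rw [hnil, List.count_nil] at hcount
    exact hk₀.ne hcount
  · rw [hC] at hcount
    exact hk.ne' hcount

lemma IsDeltaExcAt.excursionSet_upAltitude (hδ : 0 ≤ δ)
    (h : IsDeltaExcAt δ (A ++ (C ++ B)) A.length C) :
    excursionSet (upAltitude δ (A ++ (C ++ B))) (A.count true) =
      Set.Ico (A.count true) (A.count true + C.count true) := by
  have hpos : 0 < C.count true := by
    obtain ⟨C', rfl⟩ := h.exists_eq_true_cons
    simp
  have hend : upAltitude δ (A ++ (C ++ B)) (A.count true + C.count true) ≤ altitude δ A := by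
    rw [← h.altitude_append]
    simpa using upAltitude_append_count_true_le δ (A ++ C) B
  ext k
  rw [excursionSet, Set.mem_ofPred_eq, h.upAltitude_count_true]
  refine ⟨fun hk => ⟨hk.1, not_le.1 fun hle => ?_⟩, fun hk => ⟨hk.1, fun l hl => ?_⟩⟩
  · exact (hk.2 _ ⟨Nat.lt_add_of_pos_right hpos, hle⟩).not_ge hend
  · obtain ⟨r, rfl⟩ := Nat.exists_eq_add_of_le hl.1.le
    exact h.lt_upAltitude hδ (Nat.pos_of_lt_add_right hl.1)
      (Nat.lt_of_add_lt_add_left (hl.2.trans_lt hk.2))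

lemma upAltitude_append_false_cons (δ : ℕ → ℤ) (A C B : List Bool) :
    upAltitude δ (A ++ (C ++ false :: B)) = upAltitude δ (A ++ false :: (C ++ B)) +
      (Set.Ico (A.count true) (A.count true + C.count true)).indicator 1 := by
  ext k
  rw [Pi.add_apply]
  rcases lt_or_ge k (A.count true) with hk | hk
  · simp [upAltitude, beforeUp_append_of_lt _ hk, hk.not_ge]
  obtain ⟨r, rfl⟩ := Nat.exists_eq_add_of_le hk
  simp only [upAltitude, beforeUp_append_add, beforeUp]
  rcases lt_or_ge r (C.count true) with hr | hr
  · simp [beforeUp_append_of_lt _ hr, altitude_append_false_cons, hr]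
  · obtain ⟨s, rfl⟩ := Nat.exists_eq_add_of_le hr
    simp only [beforeUp_append_add, beforeUp]
    have hperm : altitude δ (A ++ (C ++ false :: beforeUp B s)) =
        altitude δ (A ++ false :: (C ++ beforeUp B s)) :=
      altitude_eq_of_perm (List.perm_middle.append_left A)
    simp [hperm]

lemma DeltaRot.isRaise (hδ : 0 ≤ δ) (h : DeltaRot δ P Q) :
    IsRaise (upAltitude δ P) (upAltitude δ Q) := by
  obtain ⟨A, C, B, rfl, rfl, hC⟩ := h
  have hassoc : A ++ false :: (C ++ B) = (A ++ [false]) ++ (C ++ B) := by simp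
  have hexc : IsDeltaExcAt δ ((A ++ [false]) ++ (C ++ B)) (A ++ [false]).length C := by
    rwa [← hassoc, List.length_append]
  have hcount : (A ++ [false]).count true = A.count true := by simp
  refine ⟨(A ++ [false]).count true, ?_⟩
  rw [raise, upAltitude_append_false_cons, hassoc, hexc.excursionSet_upAltitude hδ, hcount]

lemma exists_prefix_of_prefix_append_false_cons
    (hp : D <+: A ++ (C ++ false :: B)) : ∃ E, E <+: A ++ false :: (C ++ B) ∧
      E.count true = D.count true ∧ D.count false ≤ E.count false := by
  rcases List.prefix_or_prefix_of_prefix hp (List.prefix_append A _) with hDA | ⟨D, rfl⟩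
  · exact ⟨D, hDA.trans (List.prefix_append _ _), rfl, le_rfl⟩
  rw [List.prefix_append_right_inj] at hp
  rcases List.prefix_or_prefix_of_prefix hp (List.prefix_append C _) with hDC | ⟨D, rfl⟩
  · refine ⟨A ++ false :: D, ?_, by simp, by simp⟩
    simpa [List.cons_prefix_cons] using hDC.trans (List.prefix_append C B)
  rw [List.prefix_append_right_inj, List.prefix_cons_iff] at hp
  obtain rfl | ⟨D, rfl, hDB⟩ := hp
  · exact ⟨A ++ false :: C, by simp [List.cons_prefix_cons], by simp, by simp⟩
  · refine ⟨A ++ false :: (C ++ D), by simpa [List.cons_prefix_cons] using hDB, by simp, ?_⟩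
    simp [Nat.add_assoc]

lemma DeltaRot.isDyckWord {n : ℕ} (h : DeltaRot δ P Q) (hP : IsDyckWord n P) :
    IsDyckWord n Q := by
  obtain ⟨A, C, B, rfl, rfl, -⟩ := h
  obtain ⟨hup, hdown, hprefix⟩ := hP
  have hperm : (A ++ (C ++ false :: B)).Perm (A ++ false :: (C ++ B)) :=
    List.perm_middle.append_left A
  refine ⟨(hperm.count_eq _).trans hup, (hperm.count_eq _).trans hdown, fun D hD => ?_⟩
  obtain ⟨E, hE, htrue, hfalse⟩ := exists_prefix_of_prefix_append_false_cons hD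
  exact (hfalse.trans (hprefix E hE)).trans_eq htrue

end Rotation

section Order

variable {δ : ℕ → ℤ} {P Q R : List Bool}

lemma altLE.reflTransGen_isRaise (hδ : 0 ≤ δ) (h : altLE δ P Q) :
    Relation.ReflTransGen IsRaise (upAltitude δ P) (upAltitude δ Q) :=
  Relation.ReflTransGen.lift (upAltitude δ) (fun _ _ hPQ => hPQ.isRaise hδ) _ _ h

lemma altLE.upAltitude_le (hδ : 0 ≤ δ) (h : altLE δ P Q) : upAltitude δ P ≤ upAltitude δ Q :=
  le_of_reflTransGen_isRaise (h.reflTransGen_isRaise hδ)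

lemma altLE.eq_or_exists_deltaRot (h : altLE δ P Q) :
    P = Q ∨ ∃ R, DeltaRot δ P R ∧ altLE δ R Q :=
  Relation.ReflTransGen.cases_head h

lemma altLE.eq_of_upAltitude_eq (hδ : 0 ≤ δ) (h : altLE δ P Q)
    (heq : upAltitude δ P = upAltitude δ Q) : P = Q := by
  rcases h.eq_or_exists_deltaRot with hPQ | ⟨R, hPR, hRQ⟩
  · exact hPQ
  · exact absurd heq ((hPR.isRaise hδ).lt.trans_le (hRQ.upAltitude_le hδ)).ne

lemma DeltaRot.ltOf_altLE (hδ : 0 ≤ δ) (h : DeltaRot δ P Q) : ltOf (altLE δ) P Q :=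
  ⟨.single h, fun hQP => (h.isRaise hδ).lt.not_ge (hQP.upAltitude_le hδ)⟩

lemma DeltaRot.eq_of_altLE (hδ : 0 ≤ δ) (hPQ : DeltaRot δ P Q) (hPR : DeltaRot δ P R)
    (hRQ : altLE δ R Q) : R = Q := by
  refine hRQ.eq_of_upAltitude_eq hδ ?_
  have hraise := hRQ.reflTransGen_isRaise hδ
  obtain ⟨a, ha⟩ := hPQ.isRaise hδ
  obtain ⟨b, hb⟩ := hPR.isRaise hδ
  rw [ha, hb] at hraise ⊢
  rw [eq_of_reflTransGen_raise hraise]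

lemma IsIncFun.nonneg (hδ : IsIncFun δ) : 0 ≤ δ := by
  intro i
  rcases hδ i with h | h <;> simp [h]

end Order

theorem stmt11_general {δ : ℕ → ℤ} (hδ : 0 ≤ δ) {S : Set (List Bool)}
    (hS : ∀ P ∈ S, ∀ Q, DeltaRot δ P Q → Q ∈ S) {P Q : List Bool} (hP : P ∈ S) :
    CovIn S (altLE δ) P Q ↔ DeltaRot δ P Q := by
  constructor
  · rintro ⟨-, -, ⟨hPQ, hQP⟩, hcov⟩
    obtain rfl | ⟨R, hPR, hRQ⟩ := hPQ.eq_or_exists_deltaRot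
    · exact absurd hPQ hQP
    obtain rfl | ⟨T, hRT, hTQ⟩ := hRQ.eq_or_exists_deltaRot
    · exact hPR
    have hRQ_lt : ltOf (altLE δ) R Q := ⟨hRQ, fun hQR => (hRT.ltOf_altLE hδ).2 (hTQ.trans hQR)⟩
    exact absurd ⟨hPR.ltOf_altLE hδ, hRQ_lt⟩ (hcov R (hS P hP R hPR))
  · intro hPQ
    refine ⟨hP, hS P hP Q hPQ, hPQ.ltOf_altLE hδ, ?_⟩
    rintro R - ⟨⟨hPR, hRP⟩, hRQ, hQR⟩
    obtain rfl | ⟨T, hPT, hTR⟩ := hPR.eq_or_exists_deltaRot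
    · exact hRP hPR
    obtain rfl := hPQ.eq_of_altLE hδ hPT (hTR.trans hRQ)
    exact hQR hTR

/-- the covering relations of the alt-Tamari poset `Tam^δ_n` are exactly
the δ-rotations. -/
theorem stmt11 (n : ℕ) (δ : ℕ → ℤ) (hδ : IsIncFun δ) (P Q : List Bool)
    (hP : IsDyckWord n P) (hQ : IsDyckWord n Q) :
    CovIn (DyckSet n) (altLE δ) P Q ↔ DeltaRot δ P Q :=
  stmt11_general hδ.nonneg (fun _ hR _ hRot => hRot.isDyckWord hR) hP
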